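/- Let K be a finite field with q elements whose characteristic divides neither k nor k+1 (k ≥ 1), and let s be the number of elements x ∈ K with x^(k+1) = x. Let Y be the poset on {r₁, …, r_n, s₁, …, s_m, t₁, …, t_l} with relations: r₁ ≤ r₂ ≤ ⋯ ≤ r_n; s₁ ≤ s₂ ≤ ⋯ ≤ s_m; t₁ ≤ t₂ ≤ ⋯ ≤ t_l; r_n ≤ s_i for all i and r_n ≤ t_j for all j (hence every r_a lies below every s_i and every t_j); and no s_i is comparable with any t_j. Then the number of elements f of the incidence algebra I(Y, K) satisfying f^(k+1) = f equals Σ (n!/(n₁!⋯n_s!)) · (m!/(m₁!⋯m_s!)) · (l!/(l₁!⋯l_s!)) · q^(Σ_{1 ≤ i < j ≤ s} (n_i·n_j + m_i·m_j + l_i·l_j)) · q^(Σ_{1 ≤ i ≠ j ≤ s} n_i·(m_j + l_j)), where the sum ranges over all tuples of natural numbers (n₁,…,n_s), (m₁,…,m_s), (l₁,…,l_s) with n₁+⋯+n_s = n, m₁+⋯+m_s = m and l₁+⋯+l_s = l. -/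

import Mathlib

/-!
Let `P` be a nonzero polynomial whose roots in the field `K` with `q` elements are simple, for
instance `X ^ (k + 1) - X`. The diagonal entries of a zero `f` of `P` in the incidence algebra are
roots of `P`. Let `D` be the diagonal part of `f` and `L_z` the Lagrange basis polynomials at the
roots. Since `L_z(f)` projects onto the `z`-eigenspace of `f`, and likewise for `D`, the element
`∑ z, L_z(D) L_z(f)` intertwines `f` and `D`; its diagonal is `1`, so it is invertible. Hence the
zeros of `P` with diagonal `D` form a single orbit under conjugation by the elements with unit
diagonal, of which there are `q ^ #{x < y}`. The stabiliser of `D` consists of those vanishing at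
all `x < y` with `D x ≠ D y`, so the orbit has `q ^ #{x < y | D x ≠ D y}` elements. It remains to
sum over all colourings `D` of the poset by the roots of `P`: the exponent depends only on how often
each colour occurs on each of the three chains, and the colourings with given counts are numbered by
multinomial coefficients.
-/

section

open Finset Polynomial

section Diagonal

variable {K X : Type*} [PartialOrder X] [LocallyFiniteOrder X] [DecidableEq X]

section CommSemiring

variable [CommSemiring K]

/-- The homomorphism from the incidence algebra to `X → K` which reads off the diagonal entries. -/
def diagHom : IncidenceAlgebra K X →ₐ[K] X → K :=
  AlgHom.ofLinearMap
    { toFun := fun f x => f x x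
      map_add' := fun _ _ => rfl
      map_smul' := fun _ _ => rfl }
    (by ext; simp) (fun f g => by ext; simp)

@[simp]
lemma diagHom_apply (f : IncidenceAlgebra K X) (x : X) : diagHom f x = f x x := rfl

/-- The embedding of `X → K` into the incidence algebra as the diagonal elements, a section of
`diagHom`. -/
def diagonalHom : (X → K) →ₐ[K] IncidenceAlgebra K X :=
  AlgHom.ofLinearMap
    { toFun := fun d => ⟨fun x y => if x = y then d x else 0, fun _ _ h => if_neg fun e => h e.le⟩
      map_add' := fun d e => by ext x y; by_cases h : x = y <;> simp [h]
      map_smul' := fun c d => by ext x y; by_cases h : x = y <;> simp [h] }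
    (by ext; simp) (fun d e => by
      ext x y
      by_cases h : x = y <;> simp [h])

@[simp]
lemma diagonalHom_apply (d : X → K) (x y : X) :
    diagonalHom d x y = if x = y then d x else 0 := rfl

@[simp]
lemma diagHom_diagonalHom (d : X → K) : diagHom (diagonalHom d) = d := by
  ext; simp

lemma diagonalHom_mul_apply (d : X → K) (f : IncidenceAlgebra K X) (x y : X) :
    (diagonalHom d * f) x y = d x * f x y := by
  by_cases hxy : x ≤ y
  · simp [hxy]
  · simp [IncidenceAlgebra.apply_eq_zero_of_not_le hxy]

lemma mul_diagonalHom_apply (d : X → K) (f : IncidenceAlgebra K X) (x y : X) :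
    (f * diagonalHom d) x y = f x y * d y := by
  by_cases hxy : x ≤ y
  · simp [hxy]
  · simp [IncidenceAlgebra.apply_eq_zero_of_not_le hxy]

lemma aeval_apply_self (f : IncidenceAlgebra K X) (P : K[X]) (x : X) :
    aeval f P x x = P.eval (f x x) := by
  simpa [coe_aeval_eq_eval] using
    (aeval_algHom_apply ((Pi.evalAlgHom K (fun _ : X => K) x).comp diagHom) f P).symm

lemma lt_card_Icc_of_pow_apply_ne_zero {f : IncidenceAlgebra K X} (hf : diagHom f = 0) (n : ℕ)
    {x y : X} (h : (f ^ n) x y ≠ 0) : n < #(Icc x y) := by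
  induction n generalizing y with
  | zero => simpa using IncidenceAlgebra.le_of_ne_zero h
  | succ n ih =>
    rw [pow_succ, IncidenceAlgebra.mul_apply] at h
    obtain ⟨z, hz, hne⟩ := exists_ne_zero_of_sum_ne_zero h
    have hzy : z ≠ y := by
      rintro rfl
      exact right_ne_zero_of_mul hne (congrFun hf z)
    have hlt : #(Icc x z) < #(Icc x y) := card_lt_card <| by
      rw [mem_Icc] at hz
      exact Icc_ssubset_Icc_right (hz.1.trans hz.2) le_rfl (lt_of_le_of_ne hz.2 hzy)
    exact (Nat.succ_le_of_lt (ih (left_ne_zero_of_mul hne))).trans_lt hlt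

lemma isNilpotent_of_diagHom_eq_zero [Finite X] {f : IncidenceAlgebra K X}
    (hf : diagHom f = 0) : IsNilpotent f := by
  have := Fintype.ofFinite X
  refine ⟨Fintype.card X, ?_⟩
  ext x y -
  by_contra h
  exact (lt_card_Icc_of_pow_apply_ne_zero hf _ h).not_ge (card_le_univ _)

end CommSemiring

lemma isUnit_of_isUnit_diagHom [CommRing K] [Finite X] {f : IncidenceAlgebra K X}
    (hf : IsUnit (diagHom f)) : IsUnit f := by
  obtain ⟨d, hd⟩ := hf
  have hdiag : diagHom (diagonalHom ↑d⁻¹ * f - 1) = 0 := by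
    rw [map_sub, map_mul, diagHom_diagonalHom, ← hd, Units.inv_mul, map_one, sub_self]
  have hunit : IsUnit (diagonalHom (↑d⁻¹ : X → K) * f) := by
    simpa using (isNilpotent_of_diagHom_eq_zero hdiag).isUnit_add_one
  exact ((d⁻¹.isUnit.map diagonalHom).mul_left_iff).1 hunit

end Diagonal

section Intertwiner

lemma semiconjBy_aeval {R A : Type*} [CommSemiring R] [Semiring A] [Algebra R A] {u a b : A}
    (h : SemiconjBy u a b) (P : R[X]) : SemiconjBy u (aeval a P) (aeval b P) := by
  induction P using Polynomial.induction_on' with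
  | add P Q hP hQ => simpa using hP.add_right hQ
  | monomial n r =>
    rw [aeval_monomial, aeval_monomial]
    exact SemiconjBy.mul_right (Algebra.commutes r u).symm (h.pow_right n)

variable {K A : Type*} [Field K] [DecidableEq K] [Ring A] [Algebra K A]

lemma nodal_dvd_X_sub_C_mul_basis {s : Finset K} {z : K} (hz : z ∈ s) :
    Lagrange.nodal s id ∣ (X - C z) * Lagrange.basis s id z := by
  rw [Lagrange.nodal_eq_mul_nodal_erase hz, Lagrange.basis_eq_prod_sub_inv_mul_nodal_div hz,
    ← Lagrange.nodal_erase_eq_nodal_div hz]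
  exact ⟨C (Lagrange.nodalWeight s id z), by rw [id]; ring⟩

lemma mul_aeval_basis {s : Finset K} {a : A} (ha : aeval a (Lagrange.nodal s id) = 0) {z : K}
    (hz : z ∈ s) :
    a * aeval a (Lagrange.basis s id z) = z • aeval a (Lagrange.basis s id z) := by
  have h := aeval_eq_zero_of_dvd_aeval_eq_zero (nodal_dvd_X_sub_C_mul_basis hz) ha
  rwa [map_mul, map_sub, aeval_X, aeval_C, sub_mul, sub_eq_zero, ← Algebra.smul_def] at h

lemma aeval_basis_mul {s : Finset K} {a : A} (ha : aeval a (Lagrange.nodal s id) = 0) {z : K}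
    (hz : z ∈ s) :
    aeval a (Lagrange.basis s id z) * a = z • aeval a (Lagrange.basis s id z) :=
  (semiconjBy_aeval (Commute.refl a) _).eq.symm.trans (mul_aeval_basis ha hz)

/-- When `a` and `b` are both annihilated by `∏ z ∈ s, (X - z)`, the sum of the products of their
spectral projections, which intertwines `a` and `b`. -/
noncomputable def lagrangeIntertwiner (s : Finset K) (a b : A) : A :=
  ∑ z ∈ s, aeval a (Lagrange.basis s id z) * aeval b (Lagrange.basis s id z)

lemma semiconjBy_lagrangeIntertwiner {s : Finset K} {a b : A}
    (ha : aeval a (Lagrange.nodal s id) = 0) (hb : aeval b (Lagrange.nodal s id) = 0) :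
    SemiconjBy (lagrangeIntertwiner s a b) b a := by
  rw [SemiconjBy, lagrangeIntertwiner, mul_sum, sum_mul]
  refine sum_congr rfl fun z hz => ?_
  rw [← mul_assoc, mul_aeval_basis ha hz, mul_assoc, aeval_basis_mul hb hz, smul_mul_assoc,
    mul_smul_comm]

end Intertwiner

section Colouring

variable {α β σ : Type*} [Fintype α] [Fintype β] [DecidableEq σ]

/-- The number of points to which `d` gives the colour `i`. -/
def colorCount (d : α → σ) (i : σ) : ℕ := #{x | d x = i}

lemma colorCount_sum (d : α ⊕ β → σ) :
    colorCount d = colorCount (d ∘ Sum.inl) + colorCount (d ∘ Sum.inr) := by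
  ext i
  simp only [colorCount, card_filter, Fintype.sum_sum_type, Pi.add_apply, Function.comp_apply]

lemma sum_single_eq_colorCount (d : α → σ) :
    ∑ x, Pi.single (d x) 1 = colorCount d := by
  ext i
  simp [colorCount, Pi.single_apply, eq_comm]

variable [Fintype σ]

lemma sum_comp_eq_sum_colorCount_mul {R : Type*} [NonAssocSemiring R] (d : α → σ) (G : σ → R) :
    ∑ x, G (d x) = ∑ i, colorCount d i * G i := by
  simp only [← sum_fiberwise' univ d G, sum_const, nsmul_eq_mul, colorCount]

lemma sum_sum_ite_eq_sum_colorCount_mul (d : α → σ) (e : β → σ) (r : σ → σ → Prop)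
    [DecidableRel r] :
    (∑ x, ∑ y, if r (d x) (e y) then 1 else 0) =
      ∑ i, ∑ j with r i j, colorCount d i * colorCount e j := by
  rw [sum_comp_eq_sum_colorCount_mul d fun i => ∑ y, if r i (e y) then 1 else 0]
  refine sum_congr rfl fun i _ => ?_
  rw [sum_comp_eq_sum_colorCount_mul e fun j => if r i j then 1 else 0, Nat.cast_id,
    ← mul_sum, sum_filter]
  simp only [mul_ite, mul_one, mul_zero, Nat.cast_id]

lemma sum_comp_colorCount [DecidableEq α] {M : Type*} [AddCommMonoid M] (F : (σ → ℕ) → M) :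
    ∑ d : α → σ, F (colorCount d) =
      ∑ v ∈ piAntidiag univ (Fintype.card α), Nat.multinomial univ v • F v := by
  -- Expand `(∑ i, Z i) ^ card α` with and without commutativity, in the semiring of formal
  -- combinations of count vectors; `F` extends linearly to this semiring.
  let Z (i : σ) : AddMonoidAlgebra ℕ (σ → ℕ) := .single (Pi.single i 1) 1
  have hZ (d : α → σ) : ∏ x, Z (d x) = .single (colorCount d) 1 := by
    rw [AddMonoidAlgebra.prod_single, prod_const_one, sum_single_eq_colorCount]
  have hZpow (v : σ → ℕ) : ∏ i, Z i ^ v i = .single v 1 := by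
    simp only [Z, AddMonoidAlgebra.single_pow, one_pow, AddMonoidAlgebra.prod_single,
      prod_const_one, ← Pi.single_smul, smul_eq_mul, mul_one, univ_sum_single]
  have hmultinomial := sum_pow_eq_sum_piAntidiag univ Z (Fintype.card α)
  rw [← card_univ, ← prod_const, prod_univ_sum, Fintype.piFinset_univ] at hmultinomial
  simp only [hZ, hZpow, ← nsmul_eq_mul] at hmultinomial
  simpa using congrArg (fun z => Finsupp.linearCombination ℕ F z.coeff) hmultinomial

end Colouring

/-- The number of strictly comparable pairs of points which are given different colours by `d`. -/
noncomputable def bichromaticPairs {X σ : Type*} [LT X] (d : X → σ) : ℕ :=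
  Nat.card {p : X × X // p.1 < p.2 ∧ d p.1 ≠ d p.2}

section Bichromatic

variable {X Y α β γ σ τ : Type*}

lemma card_lt_eq_bichromaticPairs_add [LT X] [Finite X] (d : X → σ) :
    Nat.card {p : X × X // p.1 < p.2} =
      bichromaticPairs d + Nat.card {p : X × X // p.1 < p.2 ∧ d p.1 = d p.2} := by
  classical
  have := Fintype.ofFinite X
  simp only [bichromaticPairs, Nat.card_eq_fintype_card, Fintype.card_subtype, ← filter_filter]
  rw [add_comm, card_filter_add_card_filter_not]

lemma bichromaticPairs_comp_injective [LT X] {φ : σ → τ} (hφ : φ.Injective) (d : X → σ) :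
    bichromaticPairs (φ ∘ d) = bichromaticPairs d := by
  simp only [bichromaticPairs, Function.comp_apply, hφ.ne_iff]

lemma bichromaticPairs_comp_orderIso [Preorder X] [Preorder Y] (e : X ≃o Y) (d : Y → σ) :
    bichromaticPairs (d ∘ e) = bichromaticPairs d :=
  Nat.card_congr <| (e.toEquiv.prodCongr e.toEquiv).subtypeEquiv fun p => by simp

lemma bichromaticPairs_eq_sum [Fintype X] [LT X] [DecidableLT X] [DecidableEq σ] (d : X → σ) :
    bichromaticPairs d = ∑ x, ∑ y, if x < y ∧ d x ≠ d y then 1 else 0 := by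
  rw [bichromaticPairs, Nat.card_eq_fintype_card, Fintype.card_subtype, card_filter,
    Fintype.sum_prod_type]

lemma bichromaticPairs_sum [Finite α] [Finite β] [LT α] [LT β] (d : α ⊕ β → σ) :
    bichromaticPairs d = bichromaticPairs (d ∘ Sum.inl) + bichromaticPairs (d ∘ Sum.inr) := by
  classical
  have := Fintype.ofFinite α
  have := Fintype.ofFinite β
  simp only [bichromaticPairs_eq_sum, Fintype.sum_sum_type, Sum.inl_lt_inl_iff,
    Sum.inr_lt_inr_iff, Sum.not_inl_lt_inr, Sum.not_inr_lt_inl, false_and, if_false,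
    sum_const_zero, add_zero, zero_add, Function.comp_apply]

lemma bichromaticPairs_sumLex [DecidableEq σ] [Fintype σ] [Fintype α] [Fintype β] [LT α] [LT β]
    (d : α ⊕ₗ β → σ) :
    bichromaticPairs d =
      bichromaticPairs (d ∘ Sum.inlₗ) + bichromaticPairs (d ∘ Sum.inrₗ) +
      ∑ i, ∑ j with j ≠ i, colorCount (d ∘ Sum.inlₗ) i * colorCount (d ∘ Sum.inrₗ) j := by
  classical
  have hcross := sum_sum_ite_eq_sum_colorCount_mul (d ∘ Sum.inlₗ) (d ∘ Sum.inrₗ) fun i j => j ≠ i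
  rw [← hcross]
  simp only [bichromaticPairs_eq_sum, ← toLex.sum_comp, Fintype.sum_sum_type,
    Sum.Lex.inl_lt_inl_iff, Sum.Lex.inr_lt_inr_iff, Sum.Lex.inl_lt_inr, Sum.Lex.not_inr_lt_inl,
    true_and, false_and, if_false, sum_const_zero, sum_add_distrib, Function.comp_apply,
    ne_comm]
  ring

lemma bichromaticPairs_eq_sum_colorCount [Fintype α] [LinearOrder α] [Fintype σ]
    [LinearOrder σ] [LocallyFiniteOrderTop σ] (d : α → σ) :
    bichromaticPairs d = ∑ i, ∑ j ∈ Ioi i, colorCount d i * colorCount d j := by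
  -- On a chain every unordered pair of points is comparable, so swapping the pairs with decreasing
  -- colours turns the bichromatic pairs into the ordered pairs with increasing colours.
  have hsplit (x y) : (if x < y ∧ d x ≠ d y then 1 else 0) =
      (if x < y ∧ d x < d y then 1 else 0) + if x < y ∧ d y < d x then 1 else 0 := by
    grind
  have hjoin (x y) : (if d x < d y then 1 else 0) =
      (if x < y ∧ d x < d y then 1 else 0) + if y < x ∧ d x < d y then 1 else 0 := by
    grind
  have hlt := sum_sum_ite_eq_sum_colorCount_mul d d (· < ·)
  simp only [filter_lt_eq_Ioi] at hlt
  rw [← hlt, bichromaticPairs_eq_sum]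
  simp only [hsplit, hjoin, sum_add_distrib]
  rw [sum_comm (f := fun x y => if y < x ∧ d x < d y then 1 else 0)]

lemma bichromaticPairs_sumLex_sum [Fintype α] [Fintype β] [Fintype γ]
    [LinearOrder α] [LinearOrder β] [LinearOrder γ] [Fintype σ] [LinearOrder σ]
    [LocallyFiniteOrderTop σ] (d₁ : α → σ) (d₂ : β → σ) (d₃ : γ → σ) :
    bichromaticPairs (Sum.elim d₁ (Sum.elim d₂ d₃) ∘ ofLex : α ⊕ₗ (β ⊕ γ) → σ) =
      (∑ i, ∑ j ∈ Ioi i, (colorCount d₁ i * colorCount d₁ j + colorCount d₂ i * colorCount d₂ j +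
        colorCount d₃ i * colorCount d₃ j)) +
      ∑ i, ∑ j with j ≠ i, colorCount d₁ i * (colorCount d₂ j + colorCount d₃ j) := by
  have h₁ : (Sum.elim d₁ (Sum.elim d₂ d₃) ∘ ofLex) ∘ Sum.inlₗ = d₁ := rfl
  have h₂ : (Sum.elim d₁ (Sum.elim d₂ d₃) ∘ ofLex) ∘ Sum.inrₗ = Sum.elim d₂ d₃ := rfl
  rw [bichromaticPairs_sumLex, h₁, h₂, bichromaticPairs_sum, Sum.elim_comp_inl, Sum.elim_comp_inr]
  simp only [bichromaticPairs_eq_sum_colorCount, colorCount_sum, Sum.elim_comp_inl,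
    Sum.elim_comp_inr, Pi.add_apply, sum_add_distrib, add_assoc]

lemma sum_bichromaticPairs_sumLex_sum {n m l s : ℕ} (q : ℕ) :
    ∑ d : Fin n ⊕ₗ (Fin m ⊕ Fin l) → Fin s, q ^ bichromaticPairs d =
      ∑ v ∈ Nat.antidiagonalTuple s n, ∑ w ∈ Nat.antidiagonalTuple s m,
        ∑ u ∈ Nat.antidiagonalTuple s l,
          Nat.multinomial univ v * Nat.multinomial univ w * Nat.multinomial univ u *
            q ^ (∑ i, ∑ j ∈ Ioi i, (v i * v j + w i * w j + u i * u j)) *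
            q ^ (∑ i, ∑ j with j ≠ i, v i * (w j + u j)) := by
  let E (v w u : Fin s → ℕ) : ℕ := (∑ i, ∑ j ∈ Ioi i, (v i * v j + w i * w j + u i * u j)) +
    ∑ i, ∑ j with j ≠ i, v i * (w j + u j)
  have hcount {N : ℕ} (F : (Fin s → ℕ) → ℕ) : ∑ d : Fin N → Fin s, F (colorCount d) =
      ∑ v ∈ Nat.antidiagonalTuple s N, Nat.multinomial univ v * F v := by
    simpa [piAntidiag_univ_fin_eq_antidiagonalTuple] using sum_comp_colorCount (α := Fin N) F
  calc ∑ d : Fin n ⊕ₗ (Fin m ⊕ Fin l) → Fin s, q ^ bichromaticPairs d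
      = ∑ d₁ : Fin n → Fin s, ∑ d₂ : Fin m → Fin s, ∑ d₃ : Fin l → Fin s,
          q ^ E (colorCount d₁) (colorCount d₂) (colorCount d₃) := by
        simp only [E, ← bichromaticPairs_sumLex_sum]
        rw [← (ofLex.arrowCongr (Equiv.refl (Fin s))).symm.sum_comp,
          ← (Equiv.sumArrowEquivProdArrow _ _ _).symm.sum_comp, Fintype.sum_prod_type]
        refine sum_congr rfl fun d₁ _ => ?_
        rw [← (Equiv.sumArrowEquivProdArrow _ _ _).symm.sum_comp, Fintype.sum_prod_type]
        rfl
    _ = _ := by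
        rw [hcount fun v => ∑ d₂ : Fin m → Fin s, ∑ d₃ : Fin l → Fin s,
          q ^ E v (colorCount d₂) (colorCount d₃)]
        refine sum_congr rfl fun v _ => ?_
        rw [hcount fun w => ∑ d₃ : Fin l → Fin s, q ^ E v w (colorCount d₃), mul_sum]
        refine sum_congr rfl fun w _ => ?_
        rw [hcount fun u => q ^ E v w u, ← mul_assoc, mul_sum]
        simp only [E, pow_add, mul_assoc]

end Bichromatic

section Diagonalization

variable {K X : Type*} [PartialOrder X] [LocallyFiniteOrder X] [DecidableEq X]

lemma card_diagHom_eq_one_and_apply_eq_zero [CommSemiring K] [Finite X] (r : X → X → Prop) :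
    Nat.card {g : IncidenceAlgebra K X //
        diagHom g = 1 ∧ ∀ x y, x < y → ¬ r x y → g x y = 0} =
      Nat.card K ^ Nat.card {p : X × X // p.1 < p.2 ∧ r p.1 p.2} := by
  classical
  rw [← Nat.card_fun]
  refine Nat.card_eq_of_bijective (fun g p => g.1 p.1.1 p.1.2) ⟨?_, fun h => ?_⟩
  · rintro ⟨g, hg, hg₀⟩ ⟨g', hg', hg₀'⟩ hgg'
    refine Subtype.ext (IncidenceAlgebra.ext fun x y hxy => ?_)
    rcases hxy.eq_or_lt with rfl | hlt
    · exact congrFun (hg.trans hg'.symm) x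
    · by_cases hr : r x y
      · exact congrFun hgg' ⟨(x, y), hlt, hr⟩
      · exact (hg₀ x y hlt hr).trans (hg₀' x y hlt hr).symm
  · let g : IncidenceAlgebra K X :=
      ⟨fun x y => if hxy : x < y ∧ r x y then h ⟨(x, y), hxy⟩ else if x = y then 1 else 0,
        fun x y hxy => by rw [dif_neg fun e => hxy e.1.le, if_neg fun e => hxy e.le]⟩
    refine ⟨⟨g, ?_, fun x y hlt hr => ?_⟩, ?_⟩
    · ext x
      simp [g]
    · simp [g, hr, hlt.ne]
    · ext p
      exact dif_pos p.2

lemma aeval_diagonalHom_eq_zero [CommSemiring K] {P : K[X]} {d : X → K}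
    (hd : ∀ x, P.IsRoot (d x)) : aeval (diagonalHom d) P = 0 := by
  have hP : aeval d P = 0 := by
    rw [Polynomial.aeval_pi_apply]
    exact funext hd
  rw [aeval_algHom_apply, hP, map_zero]

lemma isRoot_apply_self [CommSemiring K] {P : K[X]} {f : IncidenceAlgebra K X}
    (hf : aeval f P = 0) (x : X) : P.IsRoot (f x x) := by
  rw [IsRoot.def, ← aeval_apply_self, hf, IncidenceAlgebra.zero_apply]

lemma commute_diagonalHom_iff [CommSemiring K] [IsCancelMulZero K] {d : X → K}
    {c : IncidenceAlgebra K X} :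
    Commute c (diagonalHom d) ↔ ∀ x y, x < y → d x ≠ d y → c x y = 0 := by
  have hentry (x y : X) :
      (c * diagonalHom d) x y = (diagonalHom d * c) x y ↔ d x ≠ d y → c x y = 0 := by
    rw [diagonalHom_mul_apply, mul_diagonalHom_apply, mul_comm, mul_eq_mul_right_iff, Ne,
      ← or_iff_not_imp_left, eq_comm]
  refine ⟨fun h x y _ => (hentry x y).1 (DFunLike.congr_fun h.eq x ▸ rfl), fun h => ?_⟩
  refine IncidenceAlgebra.ext fun x y hxy => (hentry x y).2 fun hd => h x y ?_ hd
  exact hxy.lt_of_ne fun e => hd (congrArg d e)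

lemma isUnit_of_diagHom_eq_one [CommRing K] [Finite X] {u : IncidenceAlgebra K X}
    (hu : diagHom u = 1) : IsUnit u :=
  isUnit_of_isUnit_diagHom (hu ▸ isUnit_one)

lemma exists_aeval_eq_zero_semiconjBy [CommRing K] [Finite X] {P : K[X]} {d : X → K}
    (hd : ∀ x, P.IsRoot (d x)) {u : IncidenceAlgebra K X} (hu : diagHom u = 1) :
    ∃ f, (aeval f P = 0 ∧ diagHom f = d) ∧ SemiconjBy u f (diagonalHom d) := by
  obtain ⟨v, rfl⟩ := isUnit_of_diagHom_eq_one hu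
  have hconj : SemiconjBy ↑v (↑v⁻¹ * diagonalHom d * v) (diagonalHom d) := by
    rw [SemiconjBy, mul_assoc, v.mul_inv_cancel_left]
  refine ⟨_, ⟨?_, ?_⟩, hconj⟩
  · rw [← v.mul_right_eq_zero, (semiconjBy_aeval hconj P).eq, aeval_diagonalHom_eq_zero hd,
      zero_mul]
  · have hdiag := congrArg diagHom hconj.eq
    rwa [map_mul, map_mul _ (diagonalHom d), hu, one_mul, mul_one, diagHom_diagonalHom] at hdiag

variable [Field K]

lemma eval_basis_id [DecidableEq K] {s : Finset K} {z w : K} (hw : w ∈ s) :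
    (Lagrange.basis s id z).eval w = if z = w then 1 else 0 := by
  split_ifs with h
  · subst h
    exact Lagrange.eval_basis_self (v := (id : K → K)) (Set.injOn_id _) hw
  · exact Lagrange.eval_basis_of_ne (v := (id : K → K)) h hw

lemma diagHom_lagrangeIntertwiner [DecidableEq K] {s : Finset K} {f g : IncidenceAlgebra K X}
    (hfg : diagHom f = diagHom g) (hf : ∀ x, f x x ∈ s) :
    diagHom (lagrangeIntertwiner s f g) = 1 := by
  ext x
  have hx : g x x = f x x := (congrFun hfg x).symm
  calc diagHom (lagrangeIntertwiner s f g) x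
      = ∑ z ∈ s, aeval f (Lagrange.basis s id z) x x * aeval g (Lagrange.basis s id z) x x := by
        rw [lagrangeIntertwiner, map_sum, Finset.sum_apply]
        exact sum_congr rfl fun z _ => congrFun (map_mul diagHom _ _) x
    _ = ∑ z ∈ s, if z = f x x then 1 else 0 := by
        simp only [aeval_apply_self, hx, eval_basis_id (hf x), ite_zero_mul_ite_zero, and_self,
          mul_one]
    _ = 1 := by rw [Finset.sum_ite_eq', if_pos (hf x)]

section Finite

variable [Finite X]

lemma aeval_nodal_roots_eq_zero {P : K[X]} (hP₀ : P ≠ 0) (hP : P.roots.Nodup)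
    {f : IncidenceAlgebra K X} (hf : aeval f P = 0) :
    aeval f (Lagrange.nodal ⟨P.roots, hP⟩ id) = 0 := by
  obtain ⟨Q, hPQ, -, hQ⟩ := exists_prod_multiset_X_sub_C_mul P
  have hQ₀ : Q ≠ 0 := right_ne_zero_of_mul (hPQ.trans_ne hP₀)
  have hunit : IsUnit (aeval f Q) := isUnit_of_isUnit_diagHom <| Pi.isUnit_iff.2 fun x => by
    rw [diagHom_apply, aeval_apply_self, isUnit_iff_ne_zero]
    exact fun h => by simpa [hQ] using (mem_roots hQ₀).2 h
  rw [← hPQ, map_mul, hunit.mul_left_eq_zero] at hf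
  exact hf

lemma exists_semiconjBy_diagonalHom {P : K[X]} (hP₀ : P ≠ 0) (hP : P.roots.Nodup)
    {f : IncidenceAlgebra K X} (hf : aeval f P = 0) :
    ∃ u : IncidenceAlgebra K X, diagHom u = 1 ∧ SemiconjBy u f (diagonalHom (diagHom f)) := by
  classical
  have hroot : ∀ x, P.IsRoot (diagHom f x) := isRoot_apply_self hf
  exact ⟨lagrangeIntertwiner ⟨P.roots, hP⟩ (diagonalHom (diagHom f)) f,
    diagHom_lagrangeIntertwiner (diagHom_diagonalHom _) fun x => by simpa [hP₀] using hroot x,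
    semiconjBy_lagrangeIntertwiner
      (aeval_nodal_roots_eq_zero hP₀ hP (aeval_diagonalHom_eq_zero hroot))
      (aeval_nodal_roots_eq_zero hP₀ hP hf)⟩

lemma card_aeval_eq_zero_mul_card_commute {P : K[X]} (hP₀ : P ≠ 0)
    (hP : P.roots.Nodup) {d : X → K} (hd : ∀ x, P.IsRoot (d x)) :
    Nat.card {f : IncidenceAlgebra K X // aeval f P = 0 ∧ diagHom f = d} *
        Nat.card {c : IncidenceAlgebra K X // diagHom c = 1 ∧ Commute c (diagonalHom d)} =
      Nat.card {g : IncidenceAlgebra K X // diagHom g = 1} := by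
  have hconj (f : {f : IncidenceAlgebra K X // aeval f P = 0 ∧ diagHom f = d}) :
      ∃ u : IncidenceAlgebra K X, diagHom u = 1 ∧ SemiconjBy u f (diagonalHom d) := by
    obtain ⟨f, hf, rfl⟩ := f
    exact exists_semiconjBy_diagonalHom hP₀ hP hf
  choose u hu hconj using hconj
  rw [← Nat.card_prod]
  refine Nat.card_eq_of_bijective
    (fun p => ⟨p.2 * u p.1, by rw [map_mul, p.2.2.1, hu, one_mul]⟩) ⟨?_, ?_⟩
  · rintro ⟨f, c, hc, hcd⟩ ⟨f', c', hc', hcd'⟩ h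
    have hcu : c * u f = c' * u f' := congrArg Subtype.val h
    have hunit : IsUnit (c * u f) := isUnit_of_diagHom_eq_one (by rw [map_mul, hc, hu, one_mul])
    have hf : SemiconjBy (c * u f) f (diagonalHom d) := SemiconjBy.mul_left hcd (hconj f)
    have hf' : SemiconjBy (c * u f) f' (diagonalHom d) :=
      hcu ▸ SemiconjBy.mul_left hcd' (hconj f')
    obtain rfl : f = f' := Subtype.ext (hunit.mul_left_cancel (hf.eq.trans hf'.eq.symm))
    obtain rfl : c = c' := (isUnit_of_diagHom_eq_one (hu f)).mul_right_cancel hcu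
    rfl
  · rintro ⟨g, hg⟩
    obtain ⟨f, hf, hgf⟩ := exists_aeval_eq_zero_semiconjBy hd hg
    obtain ⟨v, hv⟩ := isUnit_of_diagHom_eq_one (hu ⟨f, hf⟩)
    have hvf : SemiconjBy ↑v f (diagonalHom d) := hv ▸ hconj ⟨f, hf⟩
    have hgv : g * v⁻¹.val * u ⟨f, hf⟩ = g := by rw [← hv, v.inv_mul_cancel_right]
    have hcomm : Commute (g * v⁻¹.val) (diagonalHom d) :=
      SemiconjBy.mul_left hgf hvf.units_inv_symm_left
    have hdiag : diagHom (g * v⁻¹.val) = 1 := by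
      rw [← mul_one (diagHom _), ← hu ⟨f, hf⟩, ← map_mul, hgv, hg, hu]
    exact ⟨⟨⟨f, hf⟩, g * v⁻¹.val, hdiag, hcomm⟩, Subtype.ext hgv⟩

lemma card_aeval_eq_zero_and_diagHom_eq [Finite K] {P : K[X]} (hP₀ : P ≠ 0) (hP : P.roots.Nodup)
    {d : X → K} (hd : ∀ x, P.IsRoot (d x)) :
    Nat.card {f : IncidenceAlgebra K X // aeval f P = 0 ∧ diagHom f = d} =
      Nat.card K ^ bichromaticPairs d := by
  have hunip := card_diagHom_eq_one_and_apply_eq_zero (K := K) fun _ _ : X => True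
  have hcomm := card_diagHom_eq_one_and_apply_eq_zero (K := K) fun x y : X => d x = d y
  simp only [not_true_eq_false, false_imp_iff, implies_true, and_true] at hunip
  have hmul := card_aeval_eq_zero_mul_card_commute hP₀ hP hd
  simp only [commute_diagonalHom_iff] at hmul
  rw [hunip, hcomm, card_lt_eq_bichromaticPairs_add d, pow_add] at hmul
  exact Nat.eq_of_mul_eq_mul_right (pow_pos Nat.card_pos _) hmul

end Finite

lemma card_aeval_eq_zero [Finite K] [DecidableEq K] [Fintype X] {P : K[X]} (hP₀ : P ≠ 0)
    (hP : P.roots.Nodup) :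
    Nat.card {f : IncidenceAlgebra K X // aeval f P = 0} =
      ∑ d : X → P.roots.toFinset, Nat.card K ^ bichromaticPairs d := by
  have hroot (d : X → P.roots.toFinset) (x : X) : P.IsRoot (d x) :=
    isRoot_of_mem_roots (Multiset.mem_toFinset.1 (d x).2)
  have : Finite (IncidenceAlgebra K X) := Finite.of_injective _ DFunLike.coe_injective
  have hpairs (d : X → P.roots.toFinset) :
      bichromaticPairs (fun x => (d x : K)) = bichromaticPairs d :=
    bichromaticPairs_comp_injective Subtype.val_injective d
  simp only [← hpairs, ← card_aeval_eq_zero_and_diagHom_eq hP₀ hP (hroot _)]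
  rw [← Nat.card_sigma]
  refine (Nat.card_eq_of_bijective (fun f => ⟨f.2.1, f.2.2.1⟩) ⟨?_, ?_⟩).symm
  · rintro ⟨d, f, hf, hfd⟩ ⟨d', f', hf', hfd'⟩ h
    obtain rfl : f = f' := congrArg Subtype.val h
    obtain rfl : d = d' := funext fun x => Subtype.ext <| congrFun (hfd.symm.trans hfd') x
    rfl
  · rintro ⟨f, hf⟩
    exact ⟨⟨fun x => ⟨f x x, by simpa [hP₀] using isRoot_apply_self hf x⟩, f, hf, rfl⟩, rfl⟩

end Diagonalization

lemma nonempty_orderIso_sumLex_sum {α β γ X : Type*} [PartialOrder α] [PartialOrder β]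
    [PartialOrder γ] [Preorder X] {a : α → X} {b : β → X} {c : γ → X}
    (haa : ∀ i j, a i ≤ a j ↔ i ≤ j) (hbb : ∀ i j, b i ≤ b j ↔ i ≤ j)
    (hcc : ∀ i j, c i ≤ c j ↔ i ≤ j)
    (hab : ∀ i j, a i ≤ b j) (hac : ∀ i j, a i ≤ c j)
    (hba : ∀ i j, ¬ b j ≤ a i) (hca : ∀ i j, ¬ c j ≤ a i)
    (hbc : ∀ i j, ¬ b i ≤ c j) (hcb : ∀ i j, ¬ c i ≤ b j)
    (hcover : ∀ w, (∃ i, w = a i) ∨ (∃ j, w = b j) ∨ (∃ p, w = c p)) :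
    Nonempty (α ⊕ₗ (β ⊕ γ) ≃o X) := by
  have hφ (x y : α ⊕ (β ⊕ γ)) : Sum.elim a (Sum.elim b c) x ≤ Sum.elim a (Sum.elim b c) y ↔
      toLex x ≤ toLex y := by
    rcases x with i | i | i <;> rcases y with j | j | j <;> simp [*]
  refine ⟨RelIso.ofSurjective (OrderEmbedding.ofMapLEIff (Sum.elim a (Sum.elim b c) ∘ ofLex)
    fun x y => hφ (ofLex x) (ofLex y)) fun w => ?_⟩
  rcases hcover w with ⟨i, rfl⟩ | ⟨i, rfl⟩ | ⟨i, rfl⟩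
  exacts [⟨toLex (.inl i), rfl⟩, ⟨toLex (.inr (.inl i)), rfl⟩, ⟨toLex (.inr (.inr i)), rfl⟩]

section PowSuccSub

variable {K : Type*} [Field K] {k : ℕ}

lemma separable_X_pow_succ_sub_X (hk : (k : K) ≠ 0) : (X ^ (k + 1) - X : K[X]).Separable := by
  have h : (X ^ (k + 1) - X : K[X]) = X * (X ^ k - C 1) := by rw [C_1]; ring
  have hk₀ : k ≠ 0 := by rintro rfl; simp at hk
  rw [h]
  refine separable_X.mul (separable_X_pow_sub_C 1 hk one_ne_zero) ?_
  refine ⟨X ^ (k - 1), -1, ?_⟩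
  rw [← pow_succ, Nat.sub_add_cancel (Nat.pos_of_ne_zero hk₀), C_1]
  ring

lemma card_roots_X_pow_succ_sub_X [Fintype K] [DecidableEq K] (hk : (k : K) ≠ 0) :
    Multiset.card (X ^ (k + 1) - X : K[X]).roots = #{x : K | x ^ (k + 1) = x} := by
  have hsep := separable_X_pow_succ_sub_X hk
  rw [← Multiset.toFinset_card_of_nodup (nodup_roots hsep)]
  congr 1
  ext x
  simp [hsep.ne_zero, sub_eq_zero]

end PowSuccSub

theorem stmt_15_general {K : Type*} [Field K] [Finite K] {P : K[X]} {n m l s : ℕ} (hP₀ : P ≠ 0)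
    (hP : P.roots.Nodup) (hs : Multiset.card P.roots = s) {X : Type*} [PartialOrder X]
    [LocallyFiniteOrder X] [DecidableEq X] (e : Fin n ⊕ₗ (Fin m ⊕ Fin l) ≃o X) :
    Nat.card {f : IncidenceAlgebra K X // aeval f P = 0} =
      ∑ v ∈ Nat.antidiagonalTuple s n, ∑ w ∈ Nat.antidiagonalTuple s m,
        ∑ u ∈ Nat.antidiagonalTuple s l,
          Nat.multinomial univ v * Nat.multinomial univ w * Nat.multinomial univ u *
            Nat.card K ^ (∑ i, ∑ j ∈ Ioi i, (v i * v j + w i * w j + u i * u j)) *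
            Nat.card K ^ (∑ i, ∑ j with j ≠ i, v i * (w j + u j)) := by
  classical
  have : Fintype X := .ofEquiv _ e.toEquiv
  let ε : Fin s ≃ P.roots.toFinset :=
    (equivFinOfCardEq ((Multiset.toFinset_card_of_nodup hP).trans hs)).symm
  rw [card_aeval_eq_zero hP₀ hP, ← sum_bichromaticPairs_sumLex_sum,
    ← (e.toEquiv.arrowCongr ε).sum_comp]
  refine sum_congr rfl fun d _ => congrArg (Nat.card K ^ ·) ?_
  exact (bichromaticPairs_comp_injective ε.injective _).trans
    (bichromaticPairs_comp_orderIso e.symm d)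

end

/-- Counting `(k+1)`-potent elements of the incidence algebra of the `Y` poset: a chain
`r : Fin n → X` lying below two chains `t : Fin m → X` and `w : Fin l → X`, the latter two
being mutually incomparable. Their number equals
`∑ (n!/(n₁!⋯n_s!))(m!/(m₁!⋯m_s!))(l!/(l₁!⋯l_s!)) ·
  q^(∑_{i<j}(n_i n_j + m_i m_j + l_i l_j)) · q^(∑_{i≠j} n_i(m_j + l_j))`. -/
theorem stmt_15 {K : Type*} [Field K] [Fintype K] [DecidableEq K] (q k s n m l : ℕ)
    (hq : Fintype.card K = q) (hk : 1 ≤ k)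
    (hchar_k : (k : K) ≠ 0) (hchar_k1 : ((k + 1 : ℕ) : K) ≠ 0)
    (hs : (Finset.univ.filter (fun x : K => x ^ (k + 1) = x)).card = s)
    (X : Type*) [Fintype X] [PartialOrder X] [DecidableEq X] [LocallyFiniteOrder X]
    (a : Fin n → X) (b : Fin m → X) (c : Fin l → X)
    (haa : ∀ i j, a i ≤ a j ↔ i ≤ j)
    (hbb : ∀ i j, b i ≤ b j ↔ i ≤ j)
    (hcc : ∀ i j, c i ≤ c j ↔ i ≤ j)
    (hab : ∀ i j, a i ≤ b j) (hac : ∀ i j, a i ≤ c j)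
    (hba : ∀ i j, ¬ b j ≤ a i) (hca : ∀ i j, ¬ c j ≤ a i)
    (hbc : ∀ i j, ¬ b i ≤ c j) (hcb : ∀ i j, ¬ c i ≤ b j)
    (hainj : Function.Injective a) (hbinj : Function.Injective b)
    (hcinj : Function.Injective c)
    (hab' : ∀ i j, a i ≠ b j) (hac' : ∀ i j, a i ≠ c j) (hbc' : ∀ i j, b i ≠ c j)
    (hcover : ∀ w : X, (∃ i, w = a i) ∨ (∃ j, w = b j) ∨ (∃ p, w = c p)) :
    Nat.card {f : IncidenceAlgebra K X // f ^ (k + 1) = f}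
      = ∑ v ∈ Finset.Nat.antidiagonalTuple s n,
          ∑ w ∈ Finset.Nat.antidiagonalTuple s m,
            ∑ u ∈ Finset.Nat.antidiagonalTuple s l,
              Nat.multinomial Finset.univ v * Nat.multinomial Finset.univ w *
                Nat.multinomial Finset.univ u *
                q ^ (∑ i : Fin s, ∑ j ∈ Finset.Ioi i,
                      (v i * v j + w i * w j + u i * u j)) *
                q ^ (∑ i : Fin s, ∑ j ∈ Finset.univ.filter (fun j : Fin s => j ≠ i),
                      v i * (w j + u j)) := by
  obtain ⟨e⟩ := nonempty_orderIso_sumLex_sum haa hbb hcc hab hac hba hca hbc hcb hcover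
  have hsep := separable_X_pow_succ_sub_X hchar_k
  simpa [sub_eq_zero, hq] using stmt_15_general hsep.ne_zero
    (Polynomial.nodup_roots hsep) ((card_roots_X_pow_succ_sub_X hchar_k).trans hs) e
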